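/- arXiv:2406.17184 — 5 statements merged into one kernel-verified Lean document; each statement's English description precedes it below -/
import Mathlib

section
/- The bump function B is infinitely differentiable on ℝ, and for every integer m ≥ 1, all real numbers a < b, and all x ∈ ℝ: B_{[a,b]}(a + (b−a)/3) − B_{[a,b]}(x) ≤ (L_m/(b−a)^m)·|a + (b−a)/3 − x|^m. -/
open Set MeasureTheory

/-- The basic mollifier `u₀(x) = exp(−1/(x(1/3 − x)))` on `(0, 1/3)`, `0` elsewhere. -/
noncomputable def u0 (x : ℝ) : ℝ :=
  if x ∈ Set.Ioo (0 : ℝ) (1 / 3) then Real.exp (-(1 / (x * (1 / 3 - x)))) else 0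

/-- The normalized primitive `u(x) = (∫₀^{1/3} u₀)⁻¹ · ∫_{−∞}^x u₀`. -/
noncomputable def uFn (x : ℝ) : ℝ :=
  (∫ t in (0 : ℝ)..(1 / 3), u0 t)⁻¹ * ∫ t in Set.Iic x, u0 t

/-- `L_m = sup_x |u^{(m)}(x)|/m!`. -/
noncomputable def Lm (m : ℕ) : ℝ := ⨆ x : ℝ, |iteratedDeriv m uFn x| / (m.factorial : ℝ)

/-- The bump function `B`. -/
noncomputable def bump (x : ℝ) : ℝ :=
  if x < 0 then 0
  else if x ≤ 1 / 3 then uFn x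
  else if x < 2 / 3 then 1
  else if x ≤ 1 then uFn (1 - x)
  else 0

/-- The bump function rescaled to the interval `[a, b]`. -/
noncomputable def bumpOn (a b x : ℝ) : ℝ := bump ((x - a) / (b - a))

/-!
Since `u` is smooth and vanishes on `(-∞, 0]`, all its derivatives vanish at `0`, and Taylor's
theorem there gives `|u w| ≤ L_m |w| ^ m`. The symmetry `u₀ (1/3 - x) = u₀ x` turns this into
`1 - u z ≤ L_m |1/3 - z| ^ m`. Finally `B x = u x * u (1 - x)`, where one of the two factors is
always `1`; if it is `u x` and `1/2 ≤ x`, then `1 - x` is at most as far from `1/3` as `x` is.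
-/

section General

lemma iteratedDeriv_eq_of_eqOn {𝕜 E : Type*} [NontriviallyNormedField 𝕜] [NormedAddCommGroup E]
    [NormedSpace 𝕜 E] {f g : 𝕜 → E} {s : Set 𝕜} {x : 𝕜} {n : ℕ} (hs : UniqueDiffOn 𝕜 s)
    (hf : ContDiffAt 𝕜 n f x) (hg : ContDiffAt 𝕜 n g x) (hfg : EqOn f g s) (hx : x ∈ s) :
    iteratedDeriv n f x = iteratedDeriv n g x := by
  rw [← iteratedDerivWithin_eq_iteratedDeriv hs hf hx,
    ← iteratedDerivWithin_eq_iteratedDeriv hs hg hx, iteratedDerivWithin_congr hfg hx]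

lemma isCompact_range_of_eq_outside_Icc {α X : Type*} [LinearOrder α] [TopologicalSpace α]
    [CompactIccSpace α] [TopologicalSpace X] {f : α → X} {a b : α} (hab : a ≤ b)
    (hf : ContinuousOn f (Icc a b)) (ha : ∀ x < a, f x = f a) (hb : ∀ x, b < x → f x = f b) :
    IsCompact (range f) := by
  rw [← IccExtend_eq_self (h := hab) f ha hb, IccExtend_range, range_comp, Subtype.range_coe]
  exact isCompact_Icc.image_of_continuousOn hf

lemma abs_le_of_iteratedDeriv_eq_zero {f : ℝ → ℝ} {n : ℕ} {x₀ x C : ℝ} (hf : ContDiff ℝ n f)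
    (hzero : ∀ k < n, iteratedDeriv k f x₀ = 0)
    (hC : ∀ y ∈ uIcc x₀ x, |iteratedDeriv n f y| ≤ C) :
    |f x| ≤ C * |x - x₀| ^ n / n.factorial := by
  rcases n with _ | n
  · simpa using hC x right_mem_uIcc
  rcases eq_or_ne x₀ x with rfl | hx
  · simpa using hzero 0 n.succ_pos
  obtain ⟨y, hy, hfy⟩ := taylor_mean_remainder_lagrange_iteratedDeriv hx hf.contDiffOn
  have htaylor : taylorWithinEval f n (uIcc x₀ x) x₀ x = 0 := by
    rw [taylor_within_apply]
    refine Finset.sum_eq_zero fun k hk => ?_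
    have hkn : k < n + 1 := Finset.mem_range.1 hk
    have hfk : ContDiffAt ℝ k f x₀ := (hf.of_le (by exact_mod_cast hkn.le)).contDiffAt
    rw [iteratedDerivWithin_eq_iteratedDeriv (uniqueDiffOn_uIcc hx) hfk left_mem_uIcc,
      hzero k hkn, smul_zero]
  rw [htaylor, sub_zero] at hfy
  rw [hfy, abs_div, abs_mul, abs_pow, Nat.abs_cast]
  gcongr
  exact hC y (uIoo_subset_uIcc_self hy)

variable {E : Type*} [NormedAddCommGroup E] [NormedSpace ℝ E]

lemma hasDerivAt_setIntegral_Iic [CompleteSpace E] {f : ℝ → E} {x b : ℝ}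
    (hint : IntegrableOn f (Iic b)) (hxb : x < b) (hf : ContinuousAt f x) :
    HasDerivAt (fun y => ∫ t in Iic y, f t) (f x) x := by
  have hint' {y : ℝ} (hy : y ≤ b) : IntegrableOn f (Iic y) := hint.mono_set (Iic_subset_Iic.2 hy)
  have hsplit : (fun y => ∫ t in Iic y, f t) =ᶠ[nhds x]
      fun y => (∫ t in Iic x, f t) + ∫ t in x..y, f t := by
    filter_upwards [Iic_mem_nhds hxb] with y hy
    rw [← intervalIntegral.integral_Iic_sub_Iic (hint' hxb.le) (hint' hy), add_sub_cancel]
  have hmeas : StronglyMeasurableAtFilter f (nhds x) :=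
    ⟨Iic b, Iic_mem_nhds hxb, hint.aestronglyMeasurable⟩
  exact ((intervalIntegral.integral_hasDerivAt_right IntervalIntegrable.refl hmeas hf).const_add
    _).congr_of_eventuallyEq hsplit

lemma contDiff_succ_setIntegral_Iic [CompleteSpace E] {f : ℝ → E} {n : ℕ∞}
    (hint : ∀ b, IntegrableOn f (Iic b)) (hf : ContDiff ℝ n f) :
    ContDiff ℝ (n + 1) (fun x => ∫ t in Iic x, f t) := by
  have hderiv (x : ℝ) : HasDerivAt (fun y => ∫ t in Iic y, f t) (f x) x :=
    hasDerivAt_setIntegral_Iic (hint (x + 1)) (lt_add_one x) hf.continuous.continuousAt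
  rw [contDiff_succ_iff_deriv, deriv_eq hderiv]
  exact ⟨fun x => (hderiv x).differentiableAt, by simp, hf⟩

lemma setIntegral_Iic_add_setIntegral_Iic_sub {f : ℝ → E} {c : ℝ} (hint : Integrable f)
    (hsymm : ∀ x, f (c - x) = f x) (x : ℝ) :
    (∫ t in Iic x, f t) + ∫ t in Iic (c - x), f t = ∫ t, f t := by
  have hreflect : ∫ t in Iic (c - x), f t = ∫ t in Ioi x, f t := by
    have hpres := (Measure.measurePreserving_sub_left volume c).setIntegral_preimage_emb
      (Homeomorph.subLeft c).measurableEmbedding f (Iic (c - x))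
    simpa only [preimage_const_sub_Iic, sub_sub_cancel, hsymm, integral_Ici_eq_integral_Ioi]
      using hpres.symm
  rw [hreflect, intervalIntegral.integral_Iic_add_Ioi hint.integrableOn hint.integrableOn]

end General

lemma u0_eq_expNegInvGlue (x : ℝ) : u0 x = expNegInvGlue (x * (1 / 3 - x)) := by
  have hpos : x ∈ Ioo (0 : ℝ) (1 / 3) ↔ 0 < x * (1 / 3 - x) :=
    ⟨fun hx => mul_pos hx.1 (sub_pos.2 hx.2), fun hx => ⟨by nlinarith, by nlinarith⟩⟩
  simp only [u0, hpos, expNegInvGlue, ← not_lt, ite_not, one_div (x * _)]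

lemma contDiff_u0 {n : ℕ∞} : ContDiff ℝ n u0 := by
  rw [funext u0_eq_expNegInvGlue]
  exact expNegInvGlue.contDiff.comp (by fun_prop)

lemma support_u0 : Function.support u0 = Ioo 0 (1 / 3) := by
  ext x
  simp [u0, Real.exp_ne_zero]

lemma u0_third_sub (x : ℝ) : u0 (1 / 3 - x) = u0 x := by
  rw [u0_eq_expNegInvGlue, u0_eq_expNegInvGlue, sub_sub_cancel, mul_comm]

lemma integrable_u0 : Integrable u0 := by
  refine (contDiff_u0 (n := 0)).continuous.integrable_of_hasCompactSupport ?_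
  exact HasCompactSupport.of_support_subset_isCompact isCompact_Icc
    (support_u0.trans_subset Ioo_subset_Icc_self)

lemma integral_u0_eq : ∫ t in (0 : ℝ)..(1 / 3), u0 t = ∫ t, u0 t :=
  intervalIntegral.integral_eq_integral_of_support_subset
    (support_u0.trans_subset Ioo_subset_Ioc_self)

lemma integral_u0_pos : 0 < ∫ t, u0 t := by
  have hnonneg : 0 ≤ u0 := fun x => (u0_eq_expNegInvGlue x).symm ▸ expNegInvGlue.nonneg _
  rw [integral_pos_iff_support_of_nonneg hnonneg integrable_u0, support_u0]
  simp

lemma uFn_eq (x : ℝ) : uFn x = (∫ t, u0 t)⁻¹ * ∫ t in Iic x, u0 t := by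
  rw [uFn, integral_u0_eq]

lemma contDiff_uFn {n : ℕ∞} : ContDiff ℝ n uFn := by
  have hprimitive : ContDiff ℝ (n + 1) (fun x => ∫ t in Iic x, u0 t) :=
    contDiff_succ_setIntegral_Iic (fun _ => integrable_u0.integrableOn) contDiff_u0
  rw [funext uFn_eq]
  exact contDiff_const.mul (hprimitive.of_le le_self_add)

lemma uFn_third_sub (x : ℝ) : uFn (1 / 3 - x) = 1 - uFn x := by
  rw [uFn_eq, uFn_eq, eq_sub_iff_add_eq', ← mul_add,
    setIntegral_Iic_add_setIntegral_Iic_sub integrable_u0 u0_third_sub,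
    inv_mul_cancel₀ integral_u0_pos.ne']

lemma uFn_of_nonpos {x : ℝ} (hx : x ≤ 0) : uFn x = 0 := by
  have hu0 (t : ℝ) (ht : t ∈ Iic x) : u0 t = 0 := if_neg fun h => h.1.not_ge (ht.trans hx)
  rw [uFn, setIntegral_eq_zero_of_forall_eq_zero hu0, mul_zero]

lemma uFn_of_third_le {x : ℝ} (hx : 1 / 3 ≤ x) : uFn x = 1 := by
  rw [← sub_sub_cancel (1 / 3) x, uFn_third_sub, uFn_of_nonpos (sub_nonpos.2 hx), sub_zero]

lemma iteratedDeriv_uFn_of_nonpos (m : ℕ) {x : ℝ} (hx : x ≤ 0) : iteratedDeriv m uFn x = 0 := by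
  rw [iteratedDeriv_eq_of_eqOn (uniqueDiffOn_Iic 0) contDiff_uFn.contDiffAt contDiffAt_const
    (fun _ => uFn_of_nonpos) hx, iteratedDeriv_fun_const_zero]

lemma iteratedDeriv_uFn_of_third_le (m : ℕ) {x : ℝ} (hx : 1 / 3 ≤ x) :
    iteratedDeriv m uFn x = if m = 0 then 1 else 0 := by
  rw [iteratedDeriv_eq_of_eqOn (uniqueDiffOn_Ici (1 / 3)) contDiff_uFn.contDiffAt contDiffAt_const
    (fun _ => uFn_of_third_le) hx, iteratedDeriv_const]

lemma isCompact_range_iteratedDeriv_uFn (m : ℕ) : IsCompact (range (iteratedDeriv m uFn)) := by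
  refine isCompact_range_of_eq_outside_Icc (a := 0) (b := 1 / 3) (by norm_num)
    (contDiff_uFn.continuous_iteratedDeriv' m).continuousOn (fun x hx => ?_) (fun x hx => ?_)
  · rw [iteratedDeriv_uFn_of_nonpos m hx.le, iteratedDeriv_uFn_of_nonpos m le_rfl]
  · rw [iteratedDeriv_uFn_of_third_le m hx.le, iteratedDeriv_uFn_of_third_le m le_rfl]

lemma Lm_nonneg (m : ℕ) : 0 ≤ Lm m := Real.iSup_nonneg fun _ => by positivity

lemma abs_iteratedDeriv_uFn_le (m : ℕ) (x : ℝ) :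
    |iteratedDeriv m uFn x| ≤ Lm m * m.factorial := by
  have hbdd : BddAbove (range fun y => |iteratedDeriv m uFn y| / (m.factorial : ℝ)) := by
    have hcompact := (isCompact_range_iteratedDeriv_uFn m).image
      (continuous_abs.div_const (m.factorial : ℝ))
    rw [← range_comp] at hcompact
    exact hcompact.bddAbove
  rw [← div_le_iff₀ (by positivity)]
  exact le_ciSup hbdd x

lemma abs_uFn_le (m : ℕ) (x : ℝ) : |uFn x| ≤ Lm m * |x| ^ m := by
  have htaylor := abs_le_of_iteratedDeriv_eq_zero (contDiff_uFn (n := m)) (x₀ := 0) (x := x)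
    (fun k _ => iteratedDeriv_uFn_of_nonpos k le_rfl) fun y _ => abs_iteratedDeriv_uFn_le m y
  rwa [sub_zero, mul_right_comm, mul_div_cancel_right₀ _ (by positivity)] at htaylor

lemma one_sub_uFn_le (m : ℕ) (x : ℝ) : 1 - uFn x ≤ Lm m * |1 / 3 - x| ^ m := by
  rw [← uFn_third_sub]
  exact (le_abs_self _).trans (abs_uFn_le m _)

lemma bump_eq_mul (x : ℝ) : bump x = uFn x * uFn (1 - x) := by
  unfold bump
  split_ifs
  · rw [uFn_of_nonpos (by linarith), zero_mul]
  · rw [uFn_of_third_le (x := 1 - x) (by linarith), mul_one]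
  · rw [uFn_of_third_le (by linarith), uFn_of_third_le (by linarith), mul_one]
  · rw [uFn_of_third_le (x := x) (by linarith), one_mul]
  · rw [uFn_of_nonpos (x := 1 - x) (by linarith), mul_zero]

lemma contDiff_bump {n : ℕ∞} : ContDiff ℝ n bump := by
  rw [funext bump_eq_mul]
  exact contDiff_uFn.mul (contDiff_uFn.comp (contDiff_const.sub contDiff_id))

lemma bump_third : bump (1 / 3) = 1 := by
  rw [bump_eq_mul, uFn_of_third_le le_rfl, uFn_of_third_le (by norm_num), mul_one]

lemma one_sub_bump_le (m : ℕ) (x : ℝ) : 1 - bump x ≤ Lm m * |1 / 3 - x| ^ m := by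
  have hL := Lm_nonneg m
  rw [bump_eq_mul]
  rcases le_total x (1 / 2) with hx | hx
  · rw [uFn_of_third_le (x := 1 - x) (by linarith), mul_one]
    exact one_sub_uFn_le m x
  · have hcloser : |1 / 3 - (1 - x)| ≤ |1 / 3 - x| := by
      rw [abs_of_nonpos (by linarith : 1 / 3 - x ≤ 0), abs_le]
      constructor <;> linarith
    rw [uFn_of_third_le (by linarith), one_mul]
    calc 1 - uFn (1 - x) ≤ Lm m * |1 / 3 - (1 - x)| ^ m := one_sub_uFn_le m (1 - x)
      _ ≤ Lm m * |1 / 3 - x| ^ m := by gcongr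

/-- The bump function `B` is infinitely differentiable, and for every `m ≥ 1`,
every interval `[a,b]` and every `x`,
`B_{[a,b]}(a + (b−a)/3) − B_{[a,b]}(x) ≤ (L_m/(b−a)^m)·|a + (b−a)/3 − x|^m`. -/
theorem bump_smooth_and_peak_bound :
    ContDiff ℝ (⊤ : ℕ∞) bump ∧
    ∀ m : ℕ, 1 ≤ m → ∀ a b : ℝ, a < b → ∀ x : ℝ,
      bumpOn a b (a + (b - a) / 3) - bumpOn a b x ≤
        Lm m / (b - a) ^ m * |a + (b - a) / 3 - x| ^ m := by
  refine ⟨contDiff_bump, fun m _ a b hab x => ?_⟩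
  have hlen : 0 < b - a := sub_pos.2 hab
  have hpeak : (a + (b - a) / 3 - a) / (b - a) = 1 / 3 := by field
  have hdist : 1 / 3 - (x - a) / (b - a) = (a + (b - a) / 3 - x) / (b - a) := by field
  calc bumpOn a b (a + (b - a) / 3) - bumpOn a b x = 1 - bump ((x - a) / (b - a)) := by
        rw [bumpOn, bumpOn, hpeak, bump_third]
    _ ≤ Lm m * |1 / 3 - (x - a) / (b - a)| ^ m := one_sub_bump_le m _
    _ = Lm m / (b - a) ^ m * |a + (b - a) / 3 - x| ^ m := by
        rw [hdist, abs_div, abs_of_pos hlen, div_pow, div_mul_eq_mul_div, mul_div_assoc]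
end

section
/- Assume 0 < c_f < 1/(L₁ + 6) and b = (1 + c_f L₁)/2. For any j ∈ {1, …, Q_k} and any p ∈ [b, 1], set q = (p − b)/(1 − b). Then: (1) if q ∉ I_j, then F_j(p) = F₀(p); (2) if q ∈ I_j, then 0 ≤ (1 − F_j(p)) − (1 − F₀(p)) ≤ (3/2)·c_f·w_k^m, and moreover 1/2 ≤ 1 − F₀(p) ≤ 1/(1 + c_f) and 1/2 ≤ 1 − F_j(p) ≤ 1/(1 + c_f). -/
open Set MeasureTheory

/-- `L₁ = sup_x |u'(x)|`. -/
noncomputable def L1 : ℝ := ⨆ x : ℝ, |deriv uFn x|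

/-- The interval widths: `w 0 = 1` and `w k = 3^(−k!)` for `k ≥ 1`. -/
noncomputable def wSeq : ℕ → ℝ := fun k => if k = 0 then 1 else (3 : ℝ) ^ (-(k.factorial : ℤ))

/-- `a, b : ℕ → ℝ` describe an admissible nested sequence of intervals:
`[a₀,b₀] = [0,1]` and `[a_{k+1}, b_{k+1}]` is a subinterval of
`[a_k + w_k/3, b_k − w_k/3]` of length `w_{k+1}`. -/
def IsNestedTower (a b : ℕ → ℝ) : Prop :=
  a 0 = 0 ∧ b 0 = 1 ∧
  ∀ k : ℕ, a k + wSeq k / 3 ≤ a (k + 1) ∧ b (k + 1) ≤ b k - wSeq k / 3 ∧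
    b (k + 1) - a (k + 1) = wSeq (k + 1)

/-- The bump tower `f(x) = c_f·Σ_{k=0}^∞ w_k^m·B_{[a_k,b_k]}(x)`. -/
noncomputable def towerFn (m : ℕ) (cf : ℝ) (a b : ℕ → ℝ) (x : ℝ) : ℝ :=
  cf * ∑' k : ℕ, wSeq k ^ m * bumpOn (a k) (b k) x

/-- `g = f/(1+f)`, the normalization of a nonnegative function `f` to `[0,1)`. -/
noncomputable def gFn (f : ℝ → ℝ) (x : ℝ) : ℝ := f x / (1 + f x)

/-- The noise distribution function built from `f` with parameter `β`. -/
noncomputable def cdfF (f : ℝ → ℝ) (β : ℝ) (x : ℝ) : ℝ :=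
  if x < β then 0
  else if x ≤ 1 then 1 - β / x - (1 - β) / x * gFn f ((x - β) / (1 - β))
  else if x ≤ 1 + β then 2 - (1 + β) / x
  else 1

/-- The truncated bump tower using only the levels `i < k`. -/
noncomputable def towerFnBelow (m k : ℕ) (cf : ℝ) (a b : ℕ → ℝ) (x : ℝ) : ℝ :=
  cf * ∑ i ∈ Finset.range k, wSeq i ^ m * bumpOn (a i) (b i) x

/-!
Both distribution functions see their tower only through its value at `q`, and there the two towers
differ by the tail `c_f·Σ_{i ≥ k} w_i^m·B_{[a_i,b_i]}(q)`.  Nesting kills the tail outside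
`[a_k, b_k]`, and `w_{i+1} ≤ w_i / 3` dominates it by a geometric series of ratio `1/3`, whence the
factor `3/2`.  The survival probability at `p` is `(β + (1 − β) g(q)) / p`; the difference estimate
transfers to it because `t ↦ t / (1 + t)` is nondecreasing and 1-Lipschitz on `[0, ∞)` and
`1 − β ≤ p`.  The upper bound `1 / (1 + c_f)` reduces to `5/12 ≤ q` by `3 c_f ≤ 1 − β` and
`f ≤ (3/2) c_f`, and two nesting steps already force `q ≥ 1/3 + 1/9`.
-/

lemma u0_nonneg (x : ℝ) : 0 ≤ u0 x := by
  unfold u0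
  split_ifs <;> positivity

lemma u0_le_one (x : ℝ) : u0 x ≤ 1 := by
  unfold u0
  split_ifs with hx
  · have : 0 < x * (1 / 3 - x) := mul_pos hx.1 (sub_pos.2 hx.2)
    exact Real.exp_le_one_iff.2 (neg_nonpos.2 (by positivity))
  · exact zero_le_one

lemma measurable_u0 : Measurable u0 :=
  Measurable.ite measurableSet_Ioo (by fun_prop) measurable_const

lemma support_u0_subset : Function.support u0 ⊆ Ioc 0 (1 / 3) :=
  Function.support_subset_iff'.2 fun _ hx => if_neg fun hx' => hx (Ioo_subset_Ioc_self hx')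

lemma uFn_mem_Icc (x : ℝ) : uFn x ∈ Icc 0 1 := by
  have total_nonneg : 0 ≤ ∫ t, u0 t := integral_nonneg u0_nonneg
  unfold uFn
  rw [intervalIntegral.integral_eq_integral_of_support_subset support_u0_subset]
  exact ⟨mul_nonneg (inv_nonneg.2 total_nonneg) (integral_nonneg u0_nonneg),
    inv_mul_le_one_of_le₀
      (setIntegral_le_integral integrable_u0 (.of_forall u0_nonneg)) total_nonneg⟩

lemma L1_nonneg : 0 ≤ L1 :=
  Real.iSup_nonneg fun _ => abs_nonneg _

lemma bump_mem_Icc (x : ℝ) : bump x ∈ Icc 0 1 := by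
  unfold bump
  split_ifs <;> first | exact uFn_mem_Icc _ | norm_num

lemma bump_eq_zero_of_notMem_Icc {x : ℝ} (hx : x ∉ Icc 0 1) : bump x = 0 := by
  rw [mem_Icc, not_and_or, not_le, not_le] at hx
  unfold bump
  split_ifs <;> first | rfl | (exfalso; rcases hx with hx | hx <;> linarith)

lemma bumpOn_mem_Icc (a b x : ℝ) : bumpOn a b x ∈ Icc 0 1 :=
  bump_mem_Icc _

lemma bumpOn_eq_zero_of_notMem_Icc {a b x : ℝ} (hab : a < b) (hx : x ∉ Icc a b) :
    bumpOn a b x = 0 := by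
  refine bump_eq_zero_of_notMem_Icc fun hx' => hx ?_
  have hlen : 0 < b - a := sub_pos.2 hab
  have hle := (div_le_one hlen).1 hx'.2
  have hge := (le_div_iff₀ hlen).1 hx'.1
  constructor <;> linarith

lemma wSeq_pos (k : ℕ) : 0 < wSeq k := by
  unfold wSeq
  split_ifs <;> positivity

lemma wSeq_zero : wSeq 0 = 1 := by
  simp [wSeq]

lemma wSeq_one : wSeq 1 = 1 / 3 := by
  simp [wSeq]

lemma wSeq_succ_le (k : ℕ) : wSeq (k + 1) ≤ wSeq k * (1 / 3) := by
  rcases k.eq_zero_or_pos with rfl | hk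
  · rw [wSeq_zero, wSeq_one, one_mul]
  have factorial_lt : k.factorial < (k + 1).factorial := (Nat.factorial_lt hk).2 k.lt_succ_self
  calc wSeq (k + 1) = (3 : ℝ) ^ (-((k + 1).factorial : ℤ)) := if_neg k.succ_ne_zero
    _ ≤ (3 : ℝ) ^ (-(k.factorial : ℤ) - 1) := zpow_le_zpow_right₀ (by norm_num) (by omega)
    _ = wSeq k * (1 / 3) := by
      rw [wSeq, if_neg hk.ne', zpow_sub_one₀ three_ne_zero, one_div]

lemma wSeq_add_le (k i : ℕ) : wSeq (i + k) ≤ wSeq k * (1 / 3) ^ i := by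
  induction i with
  | zero => simp
  | succ i ih =>
    calc wSeq (i + 1 + k) = wSeq (i + k + 1) := by rw [add_right_comm]
      _ ≤ wSeq (i + k) * (1 / 3) := wSeq_succ_le _
      _ ≤ wSeq k * (1 / 3) ^ i * (1 / 3) := by gcongr
      _ = wSeq k * (1 / 3) ^ (i + 1) := by ring

lemma wSeq_pow_add_le {m : ℕ} (hm : 1 ≤ m) (k i : ℕ) :
    wSeq (i + k) ^ m ≤ wSeq k ^ m * (1 / 3) ^ i :=
  calc wSeq (i + k) ^ m ≤ (wSeq k * (1 / 3) ^ i) ^ m :=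
        pow_le_pow_left₀ (wSeq_pos _).le (wSeq_add_le k i) m
    _ = wSeq k ^ m * ((1 / 3) ^ i) ^ m := mul_pow _ _ _
    _ ≤ wSeq k ^ m * (1 / 3) ^ i := by
      have := wSeq_pos k
      gcongr
      exact pow_le_of_le_one (by positivity) (pow_le_one₀ (by norm_num) (by norm_num)) (by omega)

section WeightedSums

variable {m : ℕ} {c : ℕ → ℝ}

lemma wSeq_pow_mul_le (hm : 1 ≤ m) (hc : ∀ i, c i ∈ Icc 0 1) (k i : ℕ) :
    wSeq (i + k) ^ m * c i ≤ wSeq k ^ m * (1 / 3) ^ i :=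
  (mul_le_of_le_one_right (pow_nonneg (wSeq_pos _).le _) (hc i).2).trans (wSeq_pow_add_le hm k i)

lemma wSeq_pow_mul_nonneg (hc : ∀ i, c i ∈ Icc 0 1) (k i : ℕ) : 0 ≤ wSeq (i + k) ^ m * c i :=
  mul_nonneg (pow_nonneg (wSeq_pos _).le _) (hc i).1

lemma hasSum_wSeq_pow_mul_geometric (m k : ℕ) :
    HasSum (fun i : ℕ => wSeq k ^ m * (1 / 3 : ℝ) ^ i) (3 / 2 * wSeq k ^ m) := by
  have hgeom : HasSum (fun i : ℕ => (1 / 3 : ℝ) ^ i) (1 - 1 / 3)⁻¹ :=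
    hasSum_geometric_of_lt_one (by norm_num) (by norm_num)
  rw [show 3 / 2 * wSeq k ^ m = wSeq k ^ m * (1 - 1 / 3)⁻¹ by ring]
  exact hgeom.mul_left _

lemma summable_wSeq_pow_mul (hm : 1 ≤ m) (hc : ∀ i, c i ∈ Icc 0 1) (k : ℕ) :
    Summable fun i => wSeq (i + k) ^ m * c i :=
  .of_nonneg_of_le (wSeq_pow_mul_nonneg hc k) (wSeq_pow_mul_le hm hc k)
    (hasSum_wSeq_pow_mul_geometric m k).summable

lemma tsum_wSeq_pow_mul_le (hm : 1 ≤ m) (hc : ∀ i, c i ∈ Icc 0 1) (k : ℕ) :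
    ∑' i, wSeq (i + k) ^ m * c i ≤ 3 / 2 * wSeq k ^ m :=
  hasSum_le (wSeq_pow_mul_le hm hc k) (summable_wSeq_pow_mul hm hc k).hasSum
    (hasSum_wSeq_pow_mul_geometric m k)

end WeightedSums

section Tower

variable {m : ℕ} {cf : ℝ}

lemma towerFn_sub_towerFnBelow (hm : 1 ≤ m) (k : ℕ) (cf : ℝ) (a b : ℕ → ℝ) (x : ℝ) :
    towerFn m cf a b x - towerFnBelow m k cf a b x =
      cf * ∑' i, wSeq (i + k) ^ m * bumpOn (a (i + k)) (b (i + k)) x := by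
  have hs : Summable fun i => wSeq i ^ m * bumpOn (a i) (b i) x :=
    summable_wSeq_pow_mul hm (fun i => bumpOn_mem_Icc (a i) (b i) x) 0
  rw [towerFn, towerFnBelow, ← hs.sum_add_tsum_nat_add k]
  ring

lemma towerFn_sub_towerFnBelow_mem_Icc (hm : 1 ≤ m) (hcf : 0 ≤ cf) (k : ℕ) (a b : ℕ → ℝ)
    (x : ℝ) :
    towerFn m cf a b x - towerFnBelow m k cf a b x ∈ Icc 0 (3 / 2 * cf * wSeq k ^ m) := by
  have hB (i : ℕ) : bumpOn (a (i + k)) (b (i + k)) x ∈ Icc 0 1 := bumpOn_mem_Icc _ _ _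
  rw [towerFn_sub_towerFnBelow hm]
  refine ⟨mul_nonneg hcf (tsum_nonneg (wSeq_pow_mul_nonneg hB k)), ?_⟩
  calc _ ≤ cf * (3 / 2 * wSeq k ^ m) :=
        mul_le_mul_of_nonneg_left (tsum_wSeq_pow_mul_le hm hB k) hcf
    _ = 3 / 2 * cf * wSeq k ^ m := by ring

lemma towerFn_le (hm : 1 ≤ m) (hcf : 0 ≤ cf) (a b : ℕ → ℝ) (x : ℝ) :
    towerFn m cf a b x ≤ 3 / 2 * cf := by
  simpa [towerFnBelow, wSeq_zero] using (towerFn_sub_towerFnBelow_mem_Icc hm hcf 0 a b x).2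

lemma towerFnBelow_nonneg (hcf : 0 ≤ cf) (m k : ℕ) (a b : ℕ → ℝ) (x : ℝ) :
    0 ≤ towerFnBelow m k cf a b x :=
  mul_nonneg hcf <| Finset.sum_nonneg fun i _ =>
    wSeq_pow_mul_nonneg (fun i => bumpOn_mem_Icc (a i) (b i) x) 0 i

end Tower

namespace IsNestedTower

variable {a b : ℕ → ℝ}

lemma sub_eq_wSeq (hab : IsNestedTower a b) (k : ℕ) : b k - a k = wSeq k := by
  cases k with
  | zero => rw [hab.1, hab.2.1, wSeq_zero, sub_zero]
  | succ k => exact (hab.2.2 k).2.2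

lemma lt (hab : IsNestedTower a b) (k : ℕ) : a k < b k :=
  sub_pos.1 (hab.sub_eq_wSeq k ▸ wSeq_pos k)

lemma monotone_left (hab : IsNestedTower a b) : Monotone a :=
  monotone_nat_of_le_succ fun k => by linarith [(hab.2.2 k).1, wSeq_pos k]

lemma antitone_right (hab : IsNestedTower a b) : Antitone b :=
  antitone_nat_of_succ_le fun k => by linarith [(hab.2.2 k).2.1, wSeq_pos k]

lemma four_ninths_le_left (hab : IsNestedTower a b) {k : ℕ} (hk : 2 ≤ k) : 4 / 9 ≤ a k := by
  have h₁ : a 0 + wSeq 0 / 3 ≤ a 1 := (hab.2.2 0).1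
  have h₂ : a 1 + wSeq 1 / 3 ≤ a 2 := (hab.2.2 1).1
  rw [hab.1, wSeq_zero] at h₁
  rw [wSeq_one] at h₂
  linarith [hab.monotone_left hk]

lemma towerFn_eq_towerFnBelow (hab : IsNestedTower a b) {m : ℕ} (hm : 1 ≤ m) (cf : ℝ) {k : ℕ}
    {x : ℝ} (hx : x ∉ Icc (a k) (b k)) : towerFn m cf a b x = towerFnBelow m k cf a b x := by
  have hB (i : ℕ) : bumpOn (a (i + k)) (b (i + k)) x = 0 :=
    bumpOn_eq_zero_of_notMem_Icc (hab.lt _) fun hx' => hx <|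
      Icc_subset_Icc (hab.monotone_left (Nat.le_add_left k i))
        (hab.antitone_right (Nat.le_add_left k i)) hx'
  rw [← sub_eq_zero, towerFn_sub_towerFnBelow hm]
  simp only [hB, mul_zero, tsum_zero]

end IsNestedTower

section Survival

variable {f f₀ : ℝ → ℝ} {c β p x : ℝ}

lemma gFn_nonneg (hf : 0 ≤ f x) : 0 ≤ gFn f x :=
  div_nonneg hf (by positivity)

lemma gFn_sub_gFn_mem_Icc (hf₀ : 0 ≤ f₀ x) (hle : f₀ x ≤ f x) :
    gFn f x - gFn f₀ x ∈ Icc 0 (f x - f₀ x) := by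
  have hf : 0 ≤ f x := hf₀.trans hle
  have hsub : gFn f x - gFn f₀ x = (f x - f₀ x) / ((1 + f x) * (1 + f₀ x)) := by
    unfold gFn
    field_simp
    ring
  rw [hsub]
  exact ⟨div_nonneg (sub_nonneg.2 hle) (by positivity),
    div_le_self (sub_nonneg.2 hle) (one_le_mul_of_one_le_of_one_le (by linarith) (by linarith))⟩

lemma cdfF_congr (h : f ((p - β) / (1 - β)) = f₀ ((p - β) / (1 - β))) :
    cdfF f β p = cdfF f₀ β p := by
  simp only [cdfF, gFn, h]

lemma one_sub_cdfF (f : ℝ → ℝ) (hp : p ∈ Icc β 1) :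
    1 - cdfF f β p = (β + (1 - β) * gFn f ((p - β) / (1 - β))) / p := by
  rw [cdfF, if_neg hp.1.not_gt, if_pos hp.2]
  ring

lemma one_sub_cdfF_sub_mem_Icc (hβ : 1 / 2 ≤ β) (hp : p ∈ Icc β 1)
    (hf₀ : 0 ≤ f₀ ((p - β) / (1 - β)))
    (hle : f₀ ((p - β) / (1 - β)) ≤ f ((p - β) / (1 - β))) :
    (1 - cdfF f β p) - (1 - cdfF f₀ β p) ∈
      Icc 0 (f ((p - β) / (1 - β)) - f₀ ((p - β) / (1 - β))) := by
  have hp_pos : 0 < p := by linarith [hp.1]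
  have ratio_nonneg : 0 ≤ (1 - β) / p := div_nonneg (by linarith [hp.1, hp.2]) hp_pos.le
  have ratio_le_one : (1 - β) / p ≤ 1 := (div_le_one hp_pos).2 (by linarith [hp.1])
  obtain ⟨hg_nonneg, hg_le⟩ := gFn_sub_gFn_mem_Icc hf₀ hle
  have hsub : (1 - cdfF f β p) - (1 - cdfF f₀ β p) =
      (1 - β) / p * (gFn f ((p - β) / (1 - β)) - gFn f₀ ((p - β) / (1 - β))) := by
    rw [one_sub_cdfF f hp, one_sub_cdfF f₀ hp]
    ring
  rw [hsub]
  exact ⟨mul_nonneg ratio_nonneg hg_nonneg,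
    (mul_le_of_le_one_left hg_nonneg ratio_le_one).trans hg_le⟩

lemma half_le_one_sub_cdfF (hβ : 1 / 2 ≤ β) (hp : p ∈ Icc β 1)
    (hf : 0 ≤ f ((p - β) / (1 - β))) : 1 / 2 ≤ 1 - cdfF f β p := by
  have hp_pos : 0 < p := by linarith [hp.1]
  have hg : 0 ≤ (1 - β) * gFn f ((p - β) / (1 - β)) :=
    mul_nonneg (by linarith [hp.1, hp.2]) (gFn_nonneg hf)
  rw [one_sub_cdfF f hp, le_div_iff₀ hp_pos]
  linarith [hp.2]

lemma one_add_mul_gFn_le (hc : 0 ≤ c) (hf : f x ∈ Icc 0 (3 / 2 * c)) :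
    (1 + c) * gFn f x ≤ 3 / 2 * c := by
  obtain ⟨hf_nonneg, hf_le⟩ := hf
  rw [gFn, ← mul_div_assoc, div_le_iff₀ (by linarith)]
  linarith [mul_nonneg hc hf_nonneg]

lemma one_sub_cdfF_le (hc : 0 < c) (hβ : 1 / 2 ≤ β) (hβc : β ≤ 1 - 3 * c) (hp : p ∈ Icc β 1)
    (hq : 5 / 12 ≤ (p - β) / (1 - β)) (hf : f ((p - β) / (1 - β)) ∈ Icc 0 (3 / 2 * c)) :
    1 - cdfF f β p ≤ 1 / (1 + c) := by
  have hβ_pos : 0 < 1 - β := by linarith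
  rw [one_sub_cdfF f hp, div_le_div_iff₀ (by linarith [hp.1]) (by linarith)]
  have hg := one_add_mul_gFn_le hc.le hf
  have hpq : (1 - β) * ((p - β) / (1 - β)) = p - β := mul_div_cancel₀ _ hβ_pos.ne'
  generalize (p - β) / (1 - β) = q at *
  have hcβ : c * β ≤ (1 - β) * (1 / 3 - c) :=
    calc c * β ≤ (1 - β) / 3 * (1 - 3 * c) :=
          mul_le_mul (by linarith) hβc (by linarith) (by linarith)
      _ = (1 - β) * (1 / 3 - c) := by ring
  calc (β + (1 - β) * gFn f q) * (1 + c)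
      = β + c * β + (1 - β) * ((1 + c) * gFn f q) := by ring
    _ ≤ β + (1 - β) * (1 / 3 - c) + (1 - β) * (3 / 2 * c) := by gcongr
    _ = β + (1 - β) * (1 / 3 + c / 2) := by ring
    _ ≤ β + (1 - β) * q := by gcongr; linarith
    _ = 1 * p := by rw [hpq]; ring

end Survival

lemma half_one_add_mul_mem_Icc {c L : ℝ} (hc : 0 ≤ c) (hL : 0 ≤ L) (hcL : c < 1 / (L + 6)) :
    (1 + c * L) / 2 ∈ Icc (1 / 2) (1 - 3 * c) := by
  have hcL' : c * (L + 6) < 1 := (lt_div_iff₀ (by linarith)).1 hcL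
  constructor <;> linarith [mul_nonneg hc hL]

theorem instances_difference_bound_general (m : ℕ) (hm : 1 ≤ m) (cf : ℝ) (hcf : 0 < cf)
    (k : ℕ) (hk : 2 ≤ k) (a b : ℕ → ℝ) (hab : IsNestedTower a b)
    (β : ℝ) (hβ : β ∈ Set.Icc (1 / 2) (1 - 3 * cf))
    (p : ℝ) (hp : p ∈ Set.Icc β 1) (q : ℝ) (hq : q = (p - β) / (1 - β)) :
    (q ∉ Set.Icc (a k) (b k) →
      cdfF (towerFn m cf a b) β p = cdfF (towerFnBelow m k cf a b) β p) ∧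
    (q ∈ Set.Icc (a k) (b k) →
      0 ≤ (1 - cdfF (towerFn m cf a b) β p) - (1 - cdfF (towerFnBelow m k cf a b) β p) ∧
      (1 - cdfF (towerFn m cf a b) β p) - (1 - cdfF (towerFnBelow m k cf a b) β p) ≤
        3 / 2 * cf * wSeq k ^ m ∧
      1 / 2 ≤ 1 - cdfF (towerFnBelow m k cf a b) β p ∧
      1 - cdfF (towerFnBelow m k cf a b) β p ≤ 1 / (1 + cf) ∧
      1 / 2 ≤ 1 - cdfF (towerFn m cf a b) β p ∧
      1 - cdfF (towerFn m cf a b) β p ≤ 1 / (1 + cf)) := by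
  subst hq
  refine ⟨fun hq => cdfF_congr (hab.towerFn_eq_towerFnBelow hm cf hq), fun hq => ?_⟩
  have hq_ge : 5 / 12 ≤ (p - β) / (1 - β) := by linarith [hab.four_ninths_le_left hk, hq.1]
  have below_nonneg := towerFnBelow_nonneg hcf.le m k a b ((p - β) / (1 - β))
  obtain ⟨tail_nonneg, tail_le⟩ :=
    towerFn_sub_towerFnBelow_mem_Icc hm hcf.le k a b ((p - β) / (1 - β))
  have below_le := sub_nonneg.1 tail_nonneg
  have tower_nonneg := below_nonneg.trans below_le
  have tower_le := towerFn_le hm hcf.le a b ((p - β) / (1 - β))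
  obtain ⟨diff_nonneg, diff_le⟩ := one_sub_cdfF_sub_mem_Icc hβ.1 hp below_nonneg below_le
  exact ⟨diff_nonneg, diff_le.trans tail_le,
    half_le_one_sub_cdfF hβ.1 hp below_nonneg,
    one_sub_cdfF_le hcf hβ.1 hβ.2 hp hq_ge ⟨below_nonneg, below_le.trans tower_le⟩,
    half_le_one_sub_cdfF hβ.1 hp tower_nonneg,
    one_sub_cdfF_le hcf hβ.1 hβ.2 hp hq_ge ⟨tower_nonneg, tower_le⟩⟩

/-- Where the instances `F_j` and `F₀` differ, and by how much.  Here `a, b` is a full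
admissible nested tower whose level-`k` interval is the `j`-th cell
`I_j = [a_{k−1} + w_{k−1}/3 + (j−1)w_k, … + w_k]` of the level-`k` grid, `F_j` is built
from the full tower and `F₀` from its truncation below level `k`.  For `p ∈ [b,1]` and
`q = (p−b)/(1−b)`: (1) if `q ∉ I_j` then `F_j(p) = F₀(p)`; (2) if `q ∈ I_j` then
`0 ≤ (1 − F_j(p)) − (1 − F₀(p)) ≤ (3/2)c_f w_k^m` and both survival probabilities lie in
`[1/2, 1/(1+c_f)]`. -/
theorem instances_difference_bound (m : ℕ) (hm : 1 ≤ m) (cf : ℝ)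
    (hcf : 0 < cf) (hcf' : cf < 1 / (L1 + 6))
    (k : ℕ) (hk : 3 ≤ k)
    (a b : ℕ → ℝ) (hab : IsNestedTower a b)
    (j : ℕ) (hj1 : 1 ≤ j) (hjQ : (j : ℝ) ≤ wSeq (k - 1) / (3 * wSeq k))
    (hak : a k = a (k - 1) + wSeq (k - 1) / 3 + ((j : ℝ) - 1) * wSeq k)
    (β : ℝ) (hβ : β = (1 + cf * L1) / 2)
    (p : ℝ) (hp : p ∈ Set.Icc β 1) (q : ℝ) (hq : q = (p - β) / (1 - β)) :
    (q ∉ Set.Icc (a k) (b k) →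
      cdfF (towerFn m cf a b) β p = cdfF (towerFnBelow m k cf a b) β p) ∧
    (q ∈ Set.Icc (a k) (b k) →
      0 ≤ (1 - cdfF (towerFn m cf a b) β p) - (1 - cdfF (towerFnBelow m k cf a b) β p) ∧
      (1 - cdfF (towerFn m cf a b) β p) - (1 - cdfF (towerFnBelow m k cf a b) β p) ≤
        3 / 2 * cf * wSeq k ^ m ∧
      1 / 2 ≤ 1 - cdfF (towerFnBelow m k cf a b) β p ∧
      1 - cdfF (towerFnBelow m k cf a b) β p ≤ 1 / (1 + cf) ∧
      1 / 2 ≤ 1 - cdfF (towerFn m cf a b) β p ∧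
      1 - cdfF (towerFn m cf a b) β p ≤ 1 / (1 + cf)) :=
  instances_difference_bound_general m hm cf hcf k (Nat.le_of_succ_le hk) a b hab β
    (hβ ▸ half_one_add_mul_mem_Icc hcf.le L1_nonneg hcf') p hp q hq
end

section
/- Let B > 0 and B_ε > 0 with B_ε ≤ B/2. Let X be a random variable taking values in a measurable space 𝒳, let v* : 𝒳 → ℝ be measurable with B_ε ≤ v*(x) ≤ B − B_ε for all x ∈ 𝒳, let ε be a real random variable with E[ε] = 0 and |ε| ≤ B_ε almost surely, independent of X, and let P be uniformly distributed on [0, B] and independent of (X, ε). Define Y = 1{P ≤ v*(X) + ε}. Then E[B·Y | X] = v*(X) almost surely. -/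
open MeasureTheory ProbabilityTheory
open scoped ENNReal

/-!
Conditionally on the covariate `X` and the valuation `V`, the independent price `P` is still uniform
on `[0, B]`, so a sale `P ≤ V` has conditional probability `V / B`. Thus `B · 1{P ≤ V}` has
conditional expectation `V` given `(X, V)`, and the tower property leaves `E[V | X]`, in which the
centred noise averages out.
-/

theorem condExp_prodMk_ae_eq_integral_map_of_indepFun {Ω β γ F : Type*}
    [MeasurableSpace Ω] [mβ : MeasurableSpace β]
    [MeasurableSpace γ] [StandardBorelSpace γ] [Nonempty γ]
    [NormedAddCommGroup F] [NormedSpace ℝ F] [CompleteSpace F]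
    {μ : Measure Ω} [IsFiniteMeasure μ] {Z : Ω → β} {P : Ω → γ} {f : β × γ → F}
    (hZ : Measurable Z) (hP : AEMeasurable P μ) (hindep : IndepFun P Z μ)
    (hf : Integrable f (μ.map fun ω => (Z ω, P ω))) :
    μ[fun ω => f (Z ω, P ω) | mβ.comap Z] =ᵐ[μ] fun ω => ∫ p, f (Z ω, p) ∂μ.map P := by
  have hdistrib : condDistrib P Z μ =ᵐ[μ.map Z] Kernel.const β (μ.map P) := by
    rw [condDistrib_ae_eq_iff_measure_eq_compProd Z hP, Measure.compProd_const]
    exact (indepFun_iff_map_prod_eq_prod_map_map hZ.aemeasurable hP).mp hindep.symm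
  filter_upwards [condExp_prod_ae_eq_integral_condDistrib' hZ hP hf,
    ae_of_ae_map hZ.aemeasurable hdistrib] with ω hcondExp hω
  rw [hcondExp, hω, Kernel.const_apply]

theorem cond_Icc_measureReal_Iic {a b t : ℝ} (ht : t ∈ Set.Icc a b) :
    (volume[|Set.Icc a b]).real (Set.Iic t) = (t - a) / (b - a) := by
  have hinter : Set.Icc a b ∩ Set.Iic t = Set.Icc a t := by
    rw [← Set.Ici_inter_Iic, Set.inter_assoc, Set.Iic_inter_Iic, min_eq_right ht.2,
      Set.Ici_inter_Iic]
  rw [measureReal_def, cond_apply measurableSet_Icc, hinter, ENNReal.toReal_mul, ENNReal.toReal_inv,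
    ← measureReal_def, ← measureReal_def, Real.volume_real_Icc_of_le ht.1,
    Real.volume_real_Icc_of_le (ht.1.trans ht.2), inv_mul_eq_div]

section UniformPrice

variable {Ω 𝒳 : Type*} [MeasurableSpace Ω] [MeasurableSpace 𝒳] {μ : Measure Ω}
  {a b : ℝ} {X : Ω → 𝒳} {V P : Ω → ℝ}

theorem isUniform_Icc_iff_map_eq :
    pdf.IsUniform P (Set.Icc a b) μ ↔
      μ.map P = (ENNReal.ofReal (b - a))⁻¹ • volume.restrict (Set.Icc a b) := by
  rw [pdf.IsUniform, ProbabilityTheory.cond, Real.volume_Icc]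

theorem isProbabilityMeasure_of_isUniform_Icc (hab : a < b)
    (hP : pdf.IsUniform P (Set.Icc a b) μ) : IsProbabilityMeasure μ :=
  hP.isProbabilityMeasure (by simp [hab]) (by simp)

theorem condExp_prodMk_mul_ite_le_of_isUniform_Icc (hab : a < b)
    (hX : Measurable X) (hV : Measurable V)
    (hVab : ∀ᵐ ω ∂μ, V ω ∈ Set.Icc a b) (hP : pdf.IsUniform P (Set.Icc a b) μ)
    (hindep : IndepFun P (fun ω => (X ω, V ω)) μ) :
    μ[fun ω => (b - a) * (if P ω ≤ V ω then 1 else 0) |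
        MeasurableSpace.comap (fun ω => (X ω, V ω)) inferInstance] =ᵐ[μ] fun ω => V ω - a := by
  have := isProbabilityMeasure_of_isUniform_Icc hab hP
  have hPm : AEMeasurable P μ := hP.aemeasurable (by simp [hab]) (by simp)
  let f : (𝒳 × ℝ) × ℝ → ℝ := fun q => (b - a) * if q.2 ≤ q.1.2 then 1 else 0
  have hf : Measurable f :=
    (Measurable.ite (measurableSet_le (by fun_prop) (by fun_prop)) measurable_const
      measurable_const).const_mul _
  have hf_int : Integrable f (μ.map fun ω => ((X ω, V ω), P ω)) := by
    refine Integrable.of_bound hf.aestronglyMeasurable |b - a| (ae_of_all _ fun q => ?_)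
    by_cases hq : q.2 ≤ q.1.2 <;> simp [f, hq]
  filter_upwards [condExp_prodMk_ae_eq_integral_map_of_indepFun (hX.prodMk hV) hPm hindep hf_int,
    hVab] with ω hcondExp hω
  have hsale : (fun p => if p ≤ V ω then (1 : ℝ) else 0) = (Set.Iic (V ω)).indicator 1 := by
    ext p
    simp only [Set.indicator_apply, Set.mem_Iic, Pi.one_apply]
  calc _ = ∫ p, (b - a) * (if p ≤ V ω then 1 else 0) ∂μ.map P := hcondExp
    _ = (b - a) * (volume[|Set.Icc a b]).real (Set.Iic (V ω)) := by
      rw [integral_const_mul, hsale, integral_indicator_one measurableSet_Iic, hP]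
    _ = V ω - a := by
      rw [cond_Icc_measureReal_Iic hω, mul_div_cancel₀ _ (sub_pos.mpr hab).ne']

theorem condExp_mul_ite_le_of_isUniform_Icc (hab : a < b) (hX : Measurable X) (hV : Measurable V)
    (hVab : ∀ᵐ ω ∂μ, V ω ∈ Set.Icc a b) (hP : pdf.IsUniform P (Set.Icc a b) μ)
    (hindep : IndepFun P (fun ω => (X ω, V ω)) μ) :
    μ[fun ω => (b - a) * (if P ω ≤ V ω then 1 else 0) |
        MeasurableSpace.comap X inferInstance] =ᵐ[μ]
      μ[fun ω => V ω - a | MeasurableSpace.comap X inferInstance] := by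
  have := isProbabilityMeasure_of_isUniform_Icc hab hP
  have hle : MeasurableSpace.comap X inferInstance ≤
      MeasurableSpace.comap (fun ω => (X ω, V ω)) inferInstance :=
    (measurable_fst.comp (comap_measurable fun ω => (X ω, V ω))).comap_le
  exact (condExp_condExp_of_le hle (hX.prodMk hV).comap_le).symm.trans
    (condExp_congr_ae (condExp_prodMk_mul_ite_le_of_isUniform_Icc hab hX hV hVab hP hindep))

end UniformPrice

section CentredNoise

variable {Ω : Type*} {m m₀ : MeasurableSpace Ω} {μ : Measure Ω} {ε : Ω → ℝ}

theorem condExp_add_ae_eq_of_condExp_ae_eq_zero {g : Ω → ℝ} (hm : m ≤ m₀) [SigmaFinite (μ.trim hm)]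
    (hgm : StronglyMeasurable[m] g) (hg : Integrable g μ) (hε : Integrable ε μ)
    (hε0 : μ[ε | m] =ᵐ[μ] 0) : μ[fun ω => g ω + ε ω | m] =ᵐ[μ] g := by
  filter_upwards [condExp_add hg hε m, hε0] with ω hadd hω
  refine hadd.trans ?_
  rw [Pi.add_apply, hω, condExp_of_stronglyMeasurable hm hgm hg, Pi.zero_apply, add_zero]

theorem condExp_comap_ae_eq_zero_of_indepFun {β : Type*} [mβ : MeasurableSpace β]
    [IsFiniteMeasure μ] {X : Ω → β} (hX : Measurable X) (hε : Measurable ε)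
    (hindep : IndepFun ε X μ) (hmean : ∫ ω, ε ω ∂μ = 0) :
    μ[ε | mβ.comap X] =ᵐ[μ] 0 := by
  filter_upwards [condExp_indep_eq hε.comap_le hX.comap_le
    (comap_measurable ε).stronglyMeasurable hindep] with ω hω
  rw [hω, hmean, Pi.zero_apply]

end CentredNoise

theorem uniform_price_unbiased_feedback_general
    {Ω 𝒳 : Type*} [MeasurableSpace Ω] [MeasurableSpace 𝒳] {μ : Measure Ω}
    {B : ℝ} (hB : 0 < B) {X : Ω → 𝒳} (hX : Measurable X)
    {vstar : 𝒳 → ℝ} (hvstar : Measurable vstar)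
    {ε : Ω → ℝ} (hε : Measurable ε) (hεint : Integrable ε μ)
    (hεX : μ[ε | MeasurableSpace.comap X inferInstance] =ᵐ[μ] 0)
    (hval : ∀ᵐ ω ∂μ, vstar (X ω) + ε ω ∈ Set.Icc 0 B)
    {P : Ω → ℝ} (hPunif : pdf.IsUniform P (Set.Icc 0 B) μ)
    (hPindep : IndepFun P (fun ω => (X ω, ε ω)) μ) :
    μ[fun ω => B * (if P ω ≤ vstar (X ω) + ε ω then 1 else 0) |
        MeasurableSpace.comap X inferInstance] =ᵐ[μ] fun ω => vstar (X ω) := by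
  have := isProbabilityMeasure_of_isUniform_Icc hB hPunif
  have hVm : Measurable fun ω => vstar (X ω) + ε ω := by fun_prop
  have hvX : Integrable (fun ω => vstar (X ω)) μ := by
    simpa only [Pi.sub_def, add_sub_cancel_right] using
      (Integrable.of_mem_Icc 0 B hVm.aemeasurable hval).sub hεint
  have hindep : IndepFun P (fun ω => (X ω, vstar (X ω) + ε ω)) μ :=
    hPindep.comp (φ := id) (ψ := fun z : 𝒳 × ℝ => (z.1, vstar z.1 + z.2)) measurable_id
      (by fun_prop)
  have hsale := condExp_mul_ite_le_of_isUniform_Icc hB hX hVm hval hPunif hindep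
  simp only [sub_zero] at hsale
  exact hsale.trans (condExp_add_ae_eq_of_condExp_ae_eq_zero hX.comap_le
    (hvstar.comp (comap_measurable X)).stronglyMeasurable hvX hεint hεX)

/-- Posting a uniform random price `P ∼ Unif(0,B)` yields unbiased feedback:
if the valuation is `v*(X) + ε` with `E[ε] = 0`, `|ε| ≤ B_ε ≤ B/2`,
`B_ε ≤ v*(x) ≤ B − B_ε`, `ε ⊥ X`, and `P ⊥ (X, ε)`, then for `Y = 1{P ≤ v*(X) + ε}`
we have `E[B·Y | X] = v*(X)` almost surely. -/
theorem uniform_price_unbiased_feedback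
    {Ω 𝒳 : Type*} [MeasurableSpace Ω] [MeasurableSpace 𝒳]
    (μ : Measure Ω) [IsProbabilityMeasure μ]
    (B Beps : ℝ) (hB : 0 < B) (hBeps : 0 < Beps) (hBeps2 : Beps ≤ B / 2)
    (X : Ω → 𝒳) (hX : Measurable X)
    (vstar : 𝒳 → ℝ) (hvstar : Measurable vstar)
    (hvbound : ∀ x : 𝒳, Beps ≤ vstar x ∧ vstar x ≤ B - Beps)
    (ε : Ω → ℝ) (hε : Measurable ε)
    (hεmean : ∫ ω, ε ω ∂μ = 0)
    (hεbdd : ∀ᵐ ω ∂μ, |ε ω| ≤ Beps)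
    (hεX : IndepFun ε X μ)
    (P : Ω → ℝ) (hP : Measurable P)
    (hPunif : μ.map P = (ENNReal.ofReal B)⁻¹ • (volume.restrict (Set.Icc (0 : ℝ) B)))
    (hPindep : IndepFun P (fun ω => (X ω, ε ω)) μ)
    (Y : Ω → ℝ) (hY : Y = fun ω => if P ω ≤ vstar (X ω) + ε ω then (1 : ℝ) else 0) :
    μ[(fun ω => B * Y ω) | MeasurableSpace.comap X inferInstance] =ᵐ[μ]
      fun ω => vstar (X ω) := by
  have hval : ∀ᵐ ω ∂μ, vstar (X ω) + ε ω ∈ Set.Icc 0 B := hεbdd.mono fun ω hω =>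
    ⟨by linarith [hvbound (X ω), abs_le.mp hω], by linarith [hvbound (X ω), abs_le.mp hω]⟩
  rw [hY]
  exact uniform_price_unbiased_feedback_general hB hX hvstar hε
    (.of_bound hε.aestronglyMeasurable Beps hεbdd)
    (condExp_comap_ae_eq_zero_of_indepFun hX hε hεX hεmean) hval
    (isUniform_Icc_iff_map_eq.mpr (by rwa [sub_zero])) hPindep
end

section
/- Let F : ℝ → [0, 1] be nondecreasing, let B > 0, let v ∈ ℝ, and let v̂ ∈ ℝ with |v̂| ≤ M for some M > 0. Partition the interval [−M, B + M] into N ≥ 1 equal-length subintervals and let m₁ < ⋯ < m_N be their midpoints; let the candidate prices be p_j = m_j + v̂ for those j with p_j ∈ (0, B), and assume this candidate set is nonempty. Then sup_{p ∈ [0, B]} p·(1 − F(p − v)) − max_{j : p_j ∈ (0, B)} p_j·(1 − F(p_j − v)) ≤ (B + 2M)/N. In particular, if M ≤ B, the gap is at most 3B/N. -/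
open Set

/-!
Raising the price from `q` to `p` only lowers the probability of sale, so revenue grows by at most
`p - q`. A price above the mesh width has a grid price at most one mesh width below it, which is
then positive and hence a candidate. At a price below the mesh width the revenue itself is at most
that width, while every candidate earns a nonnegative revenue.
-/

/-- Expected revenue of the price `p`, where `D p` is the probability of a sale at price `p`. In
the notation of the paper, `D p = 1 - F (p - v)`. -/
def revenue (D : ℝ → ℝ) (p : ℝ) : ℝ := p * D p

/-- Midpoint of the `j`-th cell, counted from `0`, of the grid of mesh width `w` that starts at
`a`. The number of cells is left open, so that consecutive midpoints form an infinite arithmetic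
progression. -/
noncomputable def gridMidpoint (a w : ℝ) (j : ℕ) : ℝ := a + (j + 1 / 2) * w

section Revenue

variable {D : ℝ → ℝ} {p q : ℝ}

theorem revenue_nonneg (hp : 0 ≤ p) (hD : 0 ≤ D p) : 0 ≤ revenue D p :=
  mul_nonneg hp hD

theorem revenue_le_self (hp : 0 ≤ p) (hD : D p ≤ 1) : revenue D p ≤ p :=
  mul_le_of_le_one_right hp hD

theorem revenue_le_revenue_add_sub (hq : 0 ≤ q) (hqp : q ≤ p) (hD : D p ≤ D q) (hDp : D p ≤ 1) :
    revenue D p ≤ revenue D q + (p - q) :=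
  calc p * D p = q * D p + (p - q) * D p := by ring
    _ ≤ q * D q + (p - q) := by
      gcongr
      exact mul_le_of_le_one_right (sub_nonneg.mpr hqp) hDp

theorem sSup_revenue_le_sup'_add {ι : Type*} {S : Finset ι} {price : ι → ℝ} {B w : ℝ}
    (hS : S.Nonempty) (hD : AntitoneOn D (Icc 0 B)) (hD01 : MapsTo D (Icc 0 B) (Icc 0 1))
    (hB : 0 ≤ B) (hprice : ∀ j ∈ S, price j ∈ Icc 0 B)
    (hcover : ∀ p ∈ Ioc w B, ∃ j ∈ S, p ∈ Icc (price j) (price j + w)) :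
    sSup (revenue D '' Icc 0 B) ≤ S.sup' hS (fun j => revenue D (price j)) + w := by
  refine csSup_le ((nonempty_Icc.mpr hB).image _) (forall_mem_image.mpr fun p hp => ?_)
  rcases le_or_gt p w with hpw | hwp
  · have best_nonneg : 0 ≤ S.sup' hS (fun j => revenue D (price j)) :=
      let ⟨j, hj⟩ := hS
      Finset.le_sup'_of_le _ hj (revenue_nonneg (hprice j hj).1 (hD01 (hprice j hj)).1)
    linarith [revenue_le_self hp.1 (hD01 hp).2]
  · obtain ⟨j, hj, hjp, hpj⟩ := hcover p ⟨hwp, hp.2⟩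
    calc revenue D p ≤ revenue D (price j) + (p - price j) :=
          revenue_le_revenue_add_sub (hprice j hj).1 hjp (hD (hprice j hj) hp hjp) (hD01 hp).2
      _ ≤ S.sup' hS (fun j => revenue D (price j)) + w :=
          add_le_add (Finset.le_sup' (fun j => revenue D (price j)) hj)
            (sub_le_iff_le_add'.mpr hpj)

end Revenue

section Grid

variable {w : ℝ} {N : ℕ}

theorem gridMidpoint_succ (a w : ℝ) (j : ℕ) :
    gridMidpoint a w (j + 1) = gridMidpoint a w j + w := by
  simp only [gridMidpoint]
  push_cast
  ring

theorem gridMidpoint_monotone (a : ℝ) (hw : 0 ≤ w) : Monotone (gridMidpoint a w) :=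
  monotone_nat_of_le_succ fun j => by
    rw [gridMidpoint_succ]
    exact le_add_of_nonneg_right hw

theorem exists_mem_Ioc_gridMidpoint {a x : ℝ} (hw : 0 ≤ w)
    (hx : x ∈ Ioc (gridMidpoint a w 0) (gridMidpoint a w N)) :
    ∃ j : Fin N, x ∈ Ioc (gridMidpoint a w j) (gridMidpoint a w j + w) := by
  rw [← (gridMidpoint_monotone a hw).biUnion_Ico_Ioc_map_succ] at hx
  obtain ⟨j, hj, hxj⟩ := mem_iUnion₂.mp hx
  exact ⟨⟨j, hj.2⟩, by simpa only [Order.succ_eq_add_one, gridMidpoint_succ] using hxj⟩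

theorem exists_candidate_price_below {B M vhat p : ℝ} (hw : 0 ≤ w) (hNw : N * w = B + 2 * M)
    (hvhat : |vhat| ≤ M) (hp : p ∈ Ioc w B) :
    ∃ j : Fin N, gridMidpoint (-M) w j + vhat ∈ Ioo 0 B ∧
      p ∈ Icc (gridMidpoint (-M) w j + vhat) (gridMidpoint (-M) w j + vhat + w) := by
  obtain ⟨hwp, hpB⟩ := hp
  obtain ⟨hMv, hvM⟩ := abs_le.mp hvhat
  have hmem : p - vhat ∈ Ioc (gridMidpoint (-M) w 0) (gridMidpoint (-M) w N) := by
    simp only [gridMidpoint, add_mul, hNw, Nat.cast_zero, mem_Ioc]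
    constructor <;> linarith
  obtain ⟨j, hjp, hpj⟩ := exists_mem_Ioc_gridMidpoint hw hmem
  exact ⟨j, ⟨by linarith, by linarith⟩, by linarith, by linarith⟩

end Grid

/-- Discretization error of the price grid.  Partition `[−M, B+M]` into `N` equal-length
subintervals with midpoints `m j = −M + (j + 1/2)·(B+2M)/N`, and let the candidate prices be
`m j + v̂` for those `j` with `m j + v̂ ∈ (0, B)` (a nonempty collection).  Then the best
revenue over `[0,B]` exceeds the best revenue over the candidate prices by at most
`(B+2M)/N`; in particular, if `M ≤ B`, by at most `3B/N`. -/
theorem discretization_gap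
    (F : ℝ → ℝ) (B M v vhat : ℝ) (N : ℕ)
    (hF_mono : Monotone F) (hF01 : ∀ x, F x ∈ Icc (0 : ℝ) 1)
    (hB : 0 < B) (hM : 0 < M) (hvhat : |vhat| ≤ M) (hN : 1 ≤ N)
    (mid : Fin N → ℝ)
    (hmid : ∀ j : Fin N, mid j = -M + ((j : ℝ) + 1 / 2) * ((B + 2 * M) / N))
    (S : Finset (Fin N))
    (hS : S = Finset.univ.filter fun j => mid j + vhat ∈ Ioo (0 : ℝ) B)
    (hSne : S.Nonempty) :
    sSup ((fun p => p * (1 - F (p - v))) '' Icc (0 : ℝ) B) -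
        S.sup' hSne (fun j => (mid j + vhat) * (1 - F (mid j + vhat - v))) ≤
      (B + 2 * M) / N ∧
    (M ≤ B →
      sSup ((fun p => p * (1 - F (p - v))) '' Icc (0 : ℝ) B) -
          S.sup' hSne (fun j => (mid j + vhat) * (1 - F (mid j + vhat - v))) ≤
        3 * B / N) := by
  have hN0 : (0 : ℝ) < N := by exact_mod_cast hN
  have hcandidate : ∀ j, j ∈ S ↔ mid j + vhat ∈ Ioo 0 B := by simp [hS]
  have hdemand_anti : Antitone fun p => 1 - F (p - v) := fun p q hpq =>
    sub_le_sub_left (hF_mono (sub_le_sub_right hpq v)) 1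
  have hdemand01 : MapsTo (fun p => 1 - F (p - v)) (Icc 0 B) (Icc 0 1) := fun p _ =>
    Icc.one_sub_mem (hF01 (p - v))
  have hcover : ∀ p ∈ Ioc ((B + 2 * M) / N) B,
      ∃ j ∈ S, p ∈ Icc (mid j + vhat) (mid j + vhat + (B + 2 * M) / N) := by
    intro p hp
    obtain ⟨j, hj, hpj⟩ := exists_candidate_price_below (by positivity)
      (mul_div_cancel₀ (B + 2 * M) hN0.ne') hvhat hp
    rw [gridMidpoint, ← hmid] at hj hpj
    exact ⟨j, (hcandidate j).mpr hj, hpj⟩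
  have hgap := sub_le_iff_le_add'.mpr <|
    sSup_revenue_le_sup'_add hSne (hdemand_anti.antitoneOn _) hdemand01 hB.le
      (fun j hj => Ioo_subset_Icc_self ((hcandidate j).mp hj)) hcover
  refine ⟨hgap, fun hMB => hgap.trans ?_⟩
  gcongr
  linarith
end

section
/- Let F : ℝ → [0, 1] be L-Lipschitz, let B > 0, and let v, v̂ ∈ ℝ. Let p* be a maximizer of p ↦ p·(1 − F(p − v)) over [0, B] and let p̂ be a maximizer of p ↦ p·(1 − F(p − v̂)) over [0, B]. Then p*·(1 − F(p* − v)) − p̂·(1 − F(p̂ − v)) ≤ 2·B·L·|v − v̂|. -/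
open Set

/-!
At a fixed price `p`, replacing the valuation level `vhat` by `v` changes the expected revenue by at
most `|p| * L * |v - vhat|`. A price that is optimal for `vhat` can therefore lose revenue at `v`,
against a competing price, only through this change at each of the two prices.
-/

theorem sub_le_add_of_abs_sub_le_of_le {α G : Type*} [AddCommGroup G] [LinearOrder G]
    [IsOrderedAddMonoid G] {f g : α → G} {x y : α} {δ ε : G}
    (hx : |f x - g x| ≤ δ) (hy : |f y - g y| ≤ ε) (hxy : g x ≤ g y) :
    f x - f y ≤ δ + ε :=
  calc
    f x - f y = (f x - g x) + (g x - g y) + (g y - f y) := by abel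
    _ ≤ δ + 0 + ε := by
      gcongr
      · exact le_of_abs_le hx
      · exact sub_nonpos.mpr hxy
      · exact le_of_abs_le (abs_sub_comm (f y) (g y) ▸ hy)
    _ = δ + ε := by rw [add_zero]

/-- The expected revenue of the posted price `p` at valuation level `v`, when the noise in the
valuation has distribution function `F`. The price comes last, so that `expectedRevenue F v` is the
objective to maximize. -/
def expectedRevenue (F : ℝ → ℝ) (v p : ℝ) : ℝ :=
  p * (1 - F (p - v))

theorem abs_expectedRevenue_sub_le {F : ℝ → ℝ} {L : ℝ}
    (hLip : ∀ x y, |F x - F y| ≤ L * |x - y|) (v w p : ℝ) :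
    |expectedRevenue F v p - expectedRevenue F w p| ≤ |p| * (L * |v - w|) :=
  calc
    |expectedRevenue F v p - expectedRevenue F w p| = |p * (F (p - w) - F (p - v))| := by
      unfold expectedRevenue
      ring_nf
    _ = |p| * |F (p - w) - F (p - v)| := abs_mul _ _
    _ ≤ |p| * (L * |(p - w) - (p - v)|) := by
      gcongr
      exact hLip _ _
    _ = |p| * (L * |v - w|) := by rw [sub_sub_sub_cancel_left]

theorem revenue_loss_of_misspecification_general {F : ℝ → ℝ} {L B v vhat p phat : ℝ} {S : Set ℝ}
    (hLip : ∀ x y, |F x - F y| ≤ L * |x - y|) (hS : ∀ q ∈ S, |q| ≤ B)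
    (hp : p ∈ S) (hphat_mem : phat ∈ S) (hphat : IsMaxOn (expectedRevenue F vhat) S phat) :
    expectedRevenue F v p - expectedRevenue F v phat ≤ 2 * B * L * |v - vhat| := by
  have hL : 0 ≤ L * |v - vhat| := (abs_nonneg _).trans (hLip v vhat)
  calc
    expectedRevenue F v p - expectedRevenue F v phat
        ≤ |p| * (L * |v - vhat|) + |phat| * (L * |v - vhat|) :=
      sub_le_add_of_abs_sub_le_of_le (abs_expectedRevenue_sub_le hLip v vhat p)
        (abs_expectedRevenue_sub_le hLip v vhat phat) (hphat hp)
    _ ≤ B * (L * |v - vhat|) + B * (L * |v - vhat|) := by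
      gcongr
      · exact hS p hp
      · exact hS phat hphat_mem
    _ = 2 * B * L * |v - vhat| := by ring

/-- If `F : ℝ → [0,1]` is `L`-Lipschitz, `p*` maximizes `p ↦ p(1 − F(p − v))` on `[0,B]`
and `p̂` maximizes `p ↦ p(1 − F(p − v̂))` on `[0,B]`, then
`p*(1 − F(p* − v)) − p̂(1 − F(p̂ − v)) ≤ 2BL|v − v̂|`. -/
theorem revenue_loss_of_misspecification
    (F : ℝ → ℝ) (L B v vhat pstar phat : ℝ)
    (hB : 0 < B)
    (hF01 : ∀ x, F x ∈ Icc (0 : ℝ) 1)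
    (hLip : ∀ x y, |F x - F y| ≤ L * |x - y|)
    (hpstar_mem : pstar ∈ Icc (0 : ℝ) B)
    (hpstar : ∀ p ∈ Icc (0 : ℝ) B, p * (1 - F (p - v)) ≤ pstar * (1 - F (pstar - v)))
    (hphat_mem : phat ∈ Icc (0 : ℝ) B)
    (hphat : ∀ p ∈ Icc (0 : ℝ) B, p * (1 - F (p - vhat)) ≤ phat * (1 - F (phat - vhat))) :
    pstar * (1 - F (pstar - v)) - phat * (1 - F (phat - v)) ≤ 2 * B * L * |v - vhat| :=
  revenue_loss_of_misspecification_general hLip (fun _ hq => (abs_of_nonneg hq.1).trans_le hq.2)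
    hpstar_mem hphat_mem hphat
end
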